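/- Let M be a finite-dimensional (α,β)-Yetter-Drinfeld module. Then M^◇ and ◇M are (β,α)-Yetter-Drinfeld modules. -/

import Mathlib

open TensorProduct

noncomputable section

namespace GYD

variable (k H : Type) [Field k] [Ring H] [HopfAlgebra k H]

/-- `φ` is a Hopf algebra automorphism of `H` (a linear equivalence which is both an
algebra morphism and a coalgebra morphism). -/
def IsHopfAut (φ : H ≃ₗ[k] H) : Prop :=
  (∀ x y : H, φ (x * y) = φ x * φ y) ∧ (φ 1 = 1) ∧
  (∀ h : H, Coalgebra.comul (R := k) (φ h)
      = TensorProduct.map φ.toLinearMap φ.toLinearMap (Coalgebra.comul (R := k) h)) ∧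
  (∀ h : H, Coalgebra.counit (R := k) (φ h) = Coalgebra.counit (R := k) h)

/-- `Sinv` is a two-sided inverse of the antipode of `H`. -/
def IsAntipodeInv (Sinv : H → H) : Prop :=
  (∀ h : H, HopfAlgebra.antipode (R := k) (Sinv h) = h) ∧
  (∀ h : H, Sinv (HopfAlgebra.antipode (R := k) h) = h)

/-- The data `(act, coact)` makes `M` an `(α, β)`-Yetter-Drinfeld module over `H`:
`M` is a left `H`-module, a right `H`-comodule, and the compatibility
`(h·m)₍₀₎ ⊗ (h·m)₍₁₎ = h₂·m₍₀₎ ⊗ β(h₃) m₍₁₎ α(Sinv(h₁))` holds (expressed via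
arbitrary finite representations of `(Δ ⊗ id)(Δ h)` and of `coact m`). -/
def IsYD (Sinv α β : H → H) {M : Type} [AddCommGroup M] [Module k M]
    (act : H →ₗ[k] M →ₗ[k] M) (coact : M →ₗ[k] M ⊗[k] H) : Prop :=
  (∀ m : M, act 1 m = m) ∧
  (∀ (g h : H) (m : M), act (g * h) m = act g (act h m)) ∧
  (∀ m : M, LinearMap.rTensor H coact (coact m)
      = (TensorProduct.assoc k M H H).symm
          (LinearMap.lTensor M (Coalgebra.comul (R := k)) (coact m))) ∧
  (∀ m : M,
    TensorProduct.rid k M (LinearMap.lTensor M (Coalgebra.counit (R := k)) (coact m)) = m) ∧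
  (∀ (h : H) (m : M) (s t : Finset ℕ) (a b c : ℕ → H) (m₀ : ℕ → M) (m₁ : ℕ → H),
    LinearMap.rTensor H (Coalgebra.comul (R := k)) (Coalgebra.comul (R := k) h)
        = ∑ i ∈ s, (a i ⊗ₜ[k] b i) ⊗ₜ[k] c i →
    coact m = ∑ j ∈ t, m₀ j ⊗ₜ[k] m₁ j →
    coact (act h m) = ∑ i ∈ s, ∑ j ∈ t,
      act (b i) (m₀ j) ⊗ₜ[k] (β (c i) * m₁ j * α (Sinv (a i))))

/-- Characterization of the action `h · (m ⊗ n) = θ₁(h₁)·m ⊗ θ₂(h₂)·n` on `M ⊗ N`. -/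
def TensorActChar (θ₁ θ₂ : H → H) {M N : Type} [AddCommGroup M] [Module k M]
    [AddCommGroup N] [Module k N]
    (actM : H →ₗ[k] M →ₗ[k] M) (actN : H →ₗ[k] N →ₗ[k] N)
    (act : H →ₗ[k] (M ⊗[k] N) →ₗ[k] (M ⊗[k] N)) : Prop :=
  ∀ (h : H) (m : M) (n : N) (s : Finset ℕ) (p q : ℕ → H),
    Coalgebra.comul (R := k) h = ∑ i ∈ s, p i ⊗ₜ[k] q i →
    act h (m ⊗ₜ[k] n) = ∑ i ∈ s, actM (θ₁ (p i)) m ⊗ₜ[k] actN (θ₂ (q i)) n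

/-- Characterization of the "type two" action `h · (m ⊗ n) = h₂·m ⊗ h₁·n` on `M ⊗ N`. -/
def TensorActCharTwo {M N : Type} [AddCommGroup M] [Module k M]
    [AddCommGroup N] [Module k N]
    (actM : H →ₗ[k] M →ₗ[k] M) (actN : H →ₗ[k] N →ₗ[k] N)
    (act : H →ₗ[k] (M ⊗[k] N) →ₗ[k] (M ⊗[k] N)) : Prop :=
  ∀ (h : H) (m : M) (n : N) (s : Finset ℕ) (p q : ℕ → H),
    Coalgebra.comul (R := k) h = ∑ i ∈ s, p i ⊗ₜ[k] q i →
    act h (m ⊗ₜ[k] n) = ∑ i ∈ s, actM (q i) m ⊗ₜ[k] actN (p i) n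

/-- Characterization of the coaction `m ⊗ n ↦ (m₍₀₎ ⊗ n₍₀₎) ⊗ n₍₁₎ m₍₁₎` on `M ⊗ N`. -/
def TensorCoactChar {M N : Type} [AddCommGroup M] [Module k M]
    [AddCommGroup N] [Module k N]
    (coactM : M →ₗ[k] M ⊗[k] H) (coactN : N →ₗ[k] N ⊗[k] H)
    (coact : M ⊗[k] N →ₗ[k] (M ⊗[k] N) ⊗[k] H) : Prop :=
  ∀ (m : M) (n : N) (s t : Finset ℕ) (m₀ : ℕ → M) (m₁ : ℕ → H) (n₀ : ℕ → N) (n₁ : ℕ → H),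
    coactM m = ∑ i ∈ s, m₀ i ⊗ₜ[k] m₁ i →
    coactN n = ∑ j ∈ t, n₀ j ⊗ₜ[k] n₁ j →
    coact (m ⊗ₜ[k] n) = ∑ i ∈ s, ∑ j ∈ t, (m₀ i ⊗ₜ[k] n₀ j) ⊗ₜ[k] (n₁ j * m₁ i)

/-- Characterization of the "type two" coaction `m ⊗ n ↦ (m₍₀₎ ⊗ n₍₀₎) ⊗ m₍₁₎ n₍₁₎`. -/
def TensorCoactCharTwo {M N : Type} [AddCommGroup M] [Module k M]
    [AddCommGroup N] [Module k N]
    (coactM : M →ₗ[k] M ⊗[k] H) (coactN : N →ₗ[k] N ⊗[k] H)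
    (coact : M ⊗[k] N →ₗ[k] (M ⊗[k] N) ⊗[k] H) : Prop :=
  ∀ (m : M) (n : N) (s t : Finset ℕ) (m₀ : ℕ → M) (m₁ : ℕ → H) (n₀ : ℕ → N) (n₁ : ℕ → H),
    coactM m = ∑ i ∈ s, m₀ i ⊗ₜ[k] m₁ i →
    coactN n = ∑ j ∈ t, n₀ j ⊗ₜ[k] n₁ j →
    coact (m ⊗ₜ[k] n) = ∑ i ∈ s, ∑ j ∈ t, (m₀ i ⊗ₜ[k] n₀ j) ⊗ₜ[k] (m₁ i * n₁ j)

/-- Characterization of the action `(h · f)(m) = f (θ(h) · m)` on the dual space. -/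
def DualActChar (θ : H → H) {M : Type} [AddCommGroup M] [Module k M]
    (actM : H →ₗ[k] M →ₗ[k] M)
    (actD : H →ₗ[k] Module.Dual k M →ₗ[k] Module.Dual k M) : Prop :=
  ∀ (h : H) (f : Module.Dual k M) (m : M), actD h f m = f (actM (θ h) m)

/-- Characterization of the coaction `f₍₀₎(m) ⊗ f₍₁₎ = f(m₍₀₎) ⊗ σ(m₍₁₎)` on the dual space
(expressed through contraction against evaluation at each `m`). -/
def DualCoactChar (σ : H → H) {M : Type} [AddCommGroup M] [Module k M]
    (coactM : M →ₗ[k] M ⊗[k] H)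
    (coactD : Module.Dual k M →ₗ[k] Module.Dual k M ⊗[k] H) : Prop :=
  ∀ (f : Module.Dual k M) (m : M) (t : Finset ℕ) (m₀ : ℕ → M) (m₁ : ℕ → H),
    coactM m = ∑ j ∈ t, m₀ j ⊗ₜ[k] m₁ j →
    TensorProduct.lid k H (LinearMap.rTensor H (Module.Dual.eval k M m) (coactD f))
      = ∑ j ∈ t, f (m₀ j) • σ (m₁ j)

/-- Characterization of the action `(h · u)(m) = θ(h₁) · u (θ(S(h₂)) · m)` on `End(M)`. -/
def EndActChar (θ : H → H) {M : Type} [AddCommGroup M] [Module k M]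
    (actM : H →ₗ[k] M →ₗ[k] M)
    (actE : H →ₗ[k] Module.End k M →ₗ[k] Module.End k M) : Prop :=
  ∀ (h : H) (u : Module.End k M) (m : M) (s : Finset ℕ) (p q : ℕ → H),
    Coalgebra.comul (R := k) h = ∑ i ∈ s, p i ⊗ₜ[k] q i →
    actE h u m = ∑ i ∈ s,
      actM (θ (p i)) (u (actM (θ (HopfAlgebra.antipode (R := k) (q i))) m))

/-- Characterization of the coaction `u₍₀₎(m) ⊗ u₍₁₎ = u(m₍₀₎)₍₀₎ ⊗ Sinv(m₍₁₎) u(m₍₀₎)₍₁₎`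
on `End(M)`, expressed through contraction against evaluation at each `m`. -/
def EndCoactChar (Sinv : H → H) {M : Type} [AddCommGroup M] [Module k M]
    (coactM : M →ₗ[k] M ⊗[k] H)
    (coactE : Module.End k M →ₗ[k] Module.End k M ⊗[k] H) : Prop :=
  ∀ (u : Module.End k M) (m : M) (t : Finset ℕ) (m₀ : ℕ → M) (m₁ : ℕ → H)
    (r : ℕ → Finset ℕ) (n₀ : ℕ → ℕ → M) (n₁ : ℕ → ℕ → H),
    coactM m = ∑ j ∈ t, m₀ j ⊗ₜ[k] m₁ j →
    (∀ j ∈ t, coactM (u (m₀ j)) = ∑ l ∈ r j, n₀ j l ⊗ₜ[k] n₁ j l) →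
    LinearMap.rTensor H (LinearMap.applyₗ (R := k) m) (coactE u)
      = ∑ j ∈ t, ∑ l ∈ r j, n₀ j l ⊗ₜ[k] (Sinv (m₁ j) * n₁ j l)

/-- Characterization of the action `(h · u)(m) = θ(h₂) · u (θ(Sinv(h₁)) · m)` on `End(M)ᵒᵖ`. -/
def EndOpActChar (θ Sinv : H → H) {M : Type} [AddCommGroup M] [Module k M]
    (actM : H →ₗ[k] M →ₗ[k] M)
    (actE : H →ₗ[k] (Module.End k M)ᵐᵒᵖ →ₗ[k] (Module.End k M)ᵐᵒᵖ) : Prop :=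
  ∀ (h : H) (u : (Module.End k M)ᵐᵒᵖ) (m : M) (s : Finset ℕ) (p q : ℕ → H),
    Coalgebra.comul (R := k) h = ∑ i ∈ s, p i ⊗ₜ[k] q i →
    (actE h u).unop m = ∑ i ∈ s,
      actM (θ (q i)) (u.unop (actM (θ (Sinv (p i))) m))

/-- Characterization of the coaction `u₍₀₎(m) ⊗ u₍₁₎ = u(m₍₀₎)₍₀₎ ⊗ u(m₍₀₎)₍₁₎ S(m₍₁₎)`
on `End(M)ᵒᵖ`, expressed through contraction against evaluation at each `m`. -/
def EndOpCoactChar {M : Type} [AddCommGroup M] [Module k M]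
    (coactM : M →ₗ[k] M ⊗[k] H)
    (coactE : (Module.End k M)ᵐᵒᵖ →ₗ[k] (Module.End k M)ᵐᵒᵖ ⊗[k] H) : Prop :=
  ∀ (u : (Module.End k M)ᵐᵒᵖ) (m : M) (t : Finset ℕ) (m₀ : ℕ → M) (m₁ : ℕ → H)
    (r : ℕ → Finset ℕ) (n₀ : ℕ → ℕ → M) (n₁ : ℕ → ℕ → H),
    coactM m = ∑ j ∈ t, m₀ j ⊗ₜ[k] m₁ j →
    (∀ j ∈ t, coactM (u.unop (m₀ j)) = ∑ l ∈ r j, n₀ j l ⊗ₜ[k] n₁ j l) →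
    LinearMap.rTensor H ((LinearMap.applyₗ (R := k) m).comp
        (MulOpposite.opLinearEquiv k).symm.toLinearMap) (coactE u)
      = ∑ j ∈ t, ∑ l ∈ r j,
          n₀ j l ⊗ₜ[k] (n₁ j l * HopfAlgebra.antipode (R := k) (m₁ j))

/-- `A`, with the Yetter-Drinfeld structure `(act, coact)`, is an algebra in the braided
category of Yetter-Drinfeld modules over `H`. -/
def IsYDAlgebra (Sinv : H → H) {A : Type} [Ring A] [Algebra k A]
    (act : H →ₗ[k] A →ₗ[k] A) (coact : A →ₗ[k] A ⊗[k] H) : Prop :=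
  IsYD k H Sinv id id act coact ∧
  (∀ (h : H) (a b : A) (s : Finset ℕ) (p q : ℕ → H),
    Coalgebra.comul (R := k) h = ∑ i ∈ s, p i ⊗ₜ[k] q i →
    act h (a * b) = ∑ i ∈ s, act (p i) a * act (q i) b) ∧
  (∀ h : H, act h 1 = Coalgebra.counit (R := k) h • (1 : A)) ∧
  (coact 1 = (1 : A) ⊗ₜ[k] (1 : H)) ∧
  (∀ (a b : A) (s t : Finset ℕ) (a₀ : ℕ → A) (a₁ : ℕ → H) (b₀ : ℕ → A) (b₁ : ℕ → H),
    coact a = ∑ i ∈ s, a₀ i ⊗ₜ[k] a₁ i →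
    coact b = ∑ j ∈ t, b₀ j ⊗ₜ[k] b₁ j →
    coact (a * b) = ∑ i ∈ s, ∑ j ∈ t, (a₀ i * b₀ j) ⊗ₜ[k] (b₁ j * a₁ i))

/-- Characterization of the smash product multiplication
`(a # b)(a' # b') = a a'₍₀₎ # (a'₍₁₎ · b) b'` on `A ⊗ B`. -/
def SmashMulChar {A B : Type} [Ring A] [Algebra k A] [Ring B] [Algebra k B]
    (actB : H →ₗ[k] B →ₗ[k] B) (coactA : A →ₗ[k] A ⊗[k] H)
    (mul : (A ⊗[k] B) →ₗ[k] (A ⊗[k] B) →ₗ[k] (A ⊗[k] B)) : Prop :=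
  ∀ (a a' : A) (b b' : B) (t : Finset ℕ) (a₀ : ℕ → A) (a₁ : ℕ → H),
    coactA a' = ∑ j ∈ t, a₀ j ⊗ₜ[k] a₁ j →
    mul (a ⊗ₜ[k] b) (a' ⊗ₜ[k] b') = ∑ j ∈ t, (a * a₀ j) ⊗ₜ[k] (actB (a₁ j) b * b')

end GYD

/-!
Multiplying the Yetter-Drinfeld condition on the right by `α(h₁)` and cancelling the inverse of the
antipode turns it into the crossed condition `h₁·m₀ ⊗ β(h₂) m₁ = (h₂·m)₀ ⊗ (h₂·m)₁ α(h₁)`, whose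
two sides exchange roles, together with `α` and `β`, under reversal of both multiplication and
comultiplication. The dual action and coaction are transposes twisted by `θ` and `σ`, which are the
antipode and its inverse in either order. Both reverse products and coproducts, so applying `f ⊗ σ`
to the crossed condition of `M` at `θ(h)` and `m` gives the crossed condition of `M*` at `h` and
`f`, evaluated at `m`. Such evaluations determine an element of `M* ⊗ H` because `H` is free over
`k`.
-/

namespace GYD

open Coalgebra HopfAlgebra WithConv

section Antipode

variable {R A H : Type*} [CommSemiring R] [Semiring H] [Semiring A]

lemma algHom_comp_antipode_convMul [HopfAlgebra R H] [Algebra R A] (f : H →ₐ[R] A) :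
    toConv (f.toLinearMap ∘ₗ antipode R) * toConv f.toLinearMap = 1 := by
  ext x
  have := congrArg f (sum_antipode_mul_eq_algebraMap_counit (ℛ R x))
  simpa [(ℛ R x).convMul_apply] using this

lemma algHom_convMul_comp_antipode [HopfAlgebra R H] [Algebra R A] (f : H →ₐ[R] A) :
    toConv f.toLinearMap * toConv (f.toLinearMap ∘ₗ antipode R) = 1 := by
  ext x
  have := congrArg f (sum_mul_antipode_eq_algebraMap_counit (ℛ R x))
  simpa [(ℛ R x).convMul_apply] using this

lemma antipode_bialgHom [HopfAlgebra R H] [HopfAlgebra R A] (φ : H →ₐc[R] A) (h : H) :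
    antipode R (φ h) = φ (antipode R h) := by
  have left_inv : toConv (antipode R ∘ₗ (φ : H →ₐ[R] A).toLinearMap) *
      toConv (φ : H →ₐ[R] A).toLinearMap = 1 := by
    have comp_φ := LinearMap.convMul_comp_coalgHom_distrib (toConv (antipode R (A := A)))
      (toConv LinearMap.id) (φ : H →ₗc[R] A)
    rw [LinearMap.antipode_mul_id] at comp_φ
    refine WithConv.ofConv_injective (comp_φ.symm.trans ?_)
    ext x
    simp [LinearMap.convOne_def]
  have inv_eq := left_inv_eq_right_inv left_inv (algHom_convMul_comp_antipode (φ : H →ₐ[R] A))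
  exact congr($inv_eq h)

lemma includeLeft_convMul_includeRight [Bialgebra R H] :
    toConv (Algebra.TensorProduct.includeLeft (R := R) (S := R) (A := H) (B := H)).toLinearMap *
      toConv (Algebra.TensorProduct.includeRight (R := R) (A := H) (B := H)).toLinearMap =
      toConv comul := by
  ext h
  simp [(ℛ R h).convMul_apply, (ℛ R h).eq]

lemma comul_antipode [HopfAlgebra R H] (h : H) :
    comul (R := R) (antipode R h) =
      TensorProduct.map (antipode R) (antipode R) (TensorProduct.comm R H H (comul h)) := by
  let il : H →ₐ[R] H ⊗[R] H := Algebra.TensorProduct.includeLeft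
  let ir : H →ₐ[R] H ⊗[R] H := Algebra.TensorProduct.includeRight
  have left_inv : toConv (ir.toLinearMap ∘ₗ antipode R) * toConv (il.toLinearMap ∘ₗ antipode R) *
      toConv comul = 1 := by
    rw [← includeLeft_convMul_includeRight, mul_assoc, ← mul_assoc (toConv (il.toLinearMap ∘ₗ _)),
      algHom_comp_antipode_convMul, one_mul, algHom_comp_antipode_convMul]
  have inv_eq := left_inv_eq_right_inv left_inv LinearMap.comul_right_inv
  calc comul (R := R) (antipode R h)
      = (toConv (ir.toLinearMap ∘ₗ antipode R) * toConv (il.toLinearMap ∘ₗ antipode R)) h :=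
        congr($inv_eq.symm h)
    _ = TensorProduct.map (antipode R) (antipode R) (TensorProduct.comm R H H (comul h)) := by
        rw [(ℛ R h).convMul_apply, ← (ℛ R h).eq]
        simp [il, ir]

end Antipode

section AntiBialgHom

variable {R A B H : Type*} [CommSemiring R] [Semiring A] [Bialgebra R A] [Semiring B]
  [Bialgebra R B] [Semiring H] [HopfAlgebra R H]

/-- A linear map `A → B` which is a bialgebra morphism from `A` to `B` with both multiplication and
comultiplication reversed. -/
structure IsAntiBialgHom (θ : A →ₗ[R] B) : Prop where
  map_one : θ 1 = 1
  map_mul (x y : A) : θ (x * y) = θ y * θ x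
  counit_map (x : A) : counit (R := R) (θ x) = counit (R := R) x
  comul_map (x : A) : comul (R := R) (θ x) =
    TensorProduct.map θ θ (TensorProduct.comm R A A (comul x))

lemma isAntiBialgHom_antipode : IsAntiBialgHom (antipode R (A := H)) where
  map_one := antipode_one
  map_mul := antipode_mul_antidistrib
  counit_map := counit_antipode
  comul_map := comul_antipode

lemma IsAntiBialgHom.symm {e : A ≃ₗ[R] B} (he : IsAntiBialgHom (e : A →ₗ[R] B)) :
    IsAntiBialgHom (e.symm : B →ₗ[R] A) where
  map_one := by simpa [e.symm_apply_eq] using he.map_one.symm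
  map_mul x y := by simpa [e.symm_apply_eq] using (he.map_mul (e.symm y) (e.symm x)).symm
  counit_map x := by simpa using (he.counit_map (e.symm x)).symm
  comul_map x := by
    obtain ⟨y, rfl⟩ := e.surjective x
    have h := he.comul_map y
    simp only [LinearEquiv.coe_coe] at h
    rw [h, ← TensorProduct.map_comm, TensorProduct.map_map]
    simp

/-- The anti-bialgebra morphism `θ` turns a representation of `Δ a` into one of `Δ (θ a)`. -/
@[simps]
def IsAntiBialgHom.repr {θ : A →ₗ[R] B} (hθ : IsAntiBialgHom θ) {ι : Type*} {a : A}
    (𝓡 : Repr R a ι) : Repr R (θ a) ι where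
  index := 𝓡.index
  left i := θ (𝓡.right i)
  right i := θ (𝓡.left i)
  eq := by rw [hθ.comul_map, ← 𝓡.eq]; simp

end AntiBialgHom

section ConvAct

variable {R C H P : Type*} [CommSemiring R] [AddCommMonoid C] [Module R C] [Semiring H]
  [HopfAlgebra R H] [AddCommMonoid P] [Module R P]

/-- The convolution `h ↦ ∑ ψ(h₁) (F(h₂))` of an operator-valued map `ψ` with a map `F`, which makes
`Hom(C, P)` a module over the convolution algebra `Hom(C, End P)`. -/
def convAct [CoalgebraStruct R C] (ψ : C →ₗ[R] Module.End R P) (F : C →ₗ[R] P) : C →ₗ[R] P :=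
  TensorProduct.lift ψ ∘ₗ F.lTensor C ∘ₗ comul

lemma convAct_apply [CoalgebraStruct R C] (ψ : C →ₗ[R] Module.End R P) (F : C →ₗ[R] P) {ι : Type*}
    {c : C} (𝓡 : Repr R c ι) :
    convAct ψ F c = ∑ i ∈ 𝓡.index, ψ (𝓡.left i) (F (𝓡.right i)) := by
  simp [convAct, ← 𝓡.eq]

variable [Coalgebra R C]

lemma convAct_comp_comul (ψ : C →ₗ[R] Module.End R P) (G : C ⊗[R] C →ₗ[R] P) {ι : Type*} {x : C}
    (s : Finset ι) (a b c : ι → C)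
    (h : LinearMap.rTensor C comul (comul (R := R) x) = ∑ i ∈ s, (a i ⊗ₜ[R] b i) ⊗ₜ[R] c i) :
    convAct ψ (G ∘ₗ comul) x = ∑ i ∈ s, ψ (a i) (G (b i ⊗ₜ[R] c i)) := by
  have coassoc : LinearMap.lTensor C comul (comul (R := R) x) =
      ∑ i ∈ s, a i ⊗ₜ[R] (b i ⊗ₜ[R] c i) := by
    rw [← coassoc_apply, h]
    simp
  simp [convAct, LinearMap.lTensor_comp, coassoc]

lemma convAct_one (F : C →ₗ[R] P) :
    convAct (1 : WithConv (C →ₗ[R] Module.End R P)).ofConv F = F := by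
  ext c
  simp only [convAct_apply _ _ (ℛ R c)]
  have := congrArg F (sum_counit_smul (ℛ R c))
  simpa [LinearMap.convOne_def] using this

lemma convAct_convMul (ψ χ : WithConv (C →ₗ[R] Module.End R P)) (F : C →ₗ[R] P) :
    convAct (ψ * χ).ofConv F = convAct ψ.ofConv (convAct χ.ofConv F) := by
  ext c
  let contract : C ⊗[R] (C ⊗[R] C) →ₗ[R] P :=
    TensorProduct.lift ψ.ofConv ∘ₗ (TensorProduct.lift χ.ofConv ∘ₗ F.lTensor C).lTensor C
  have coassoc := congrArg contract
    (sum_tmul_tmul_eq (ℛ R c) (fun i => ℛ R _) (fun i => ℛ R _))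
  simp only [convAct_apply _ _ (ℛ R _), map_sum]
  simpa [contract, (ℛ R _).convMul_apply] using coassoc

lemma eq_convAct_iff (ψ : H →ₐ[R] Module.End R P) (F G : H →ₗ[R] P) :
    F = convAct ψ.toLinearMap G ↔ convAct (ψ.toLinearMap ∘ₗ antipode R) F = G := by
  have cancel := convAct_convMul (toConv (ψ.toLinearMap ∘ₗ antipode R)) (toConv ψ.toLinearMap) G
  have cancel' := convAct_convMul (toConv ψ.toLinearMap) (toConv (ψ.toLinearMap ∘ₗ antipode R)) F
  rw [algHom_comp_antipode_convMul, convAct_one] at cancel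
  rw [algHom_convMul_comp_antipode, convAct_one] at cancel'
  constructor
  · rintro rfl
    exact cancel.symm
  · rintro rfl
    exact cancel'

end ConvAct

section Representation

variable {R M N A B C : Type*} [CommSemiring R] [AddCommMonoid M] [Module R M] [AddCommMonoid N]
  [Module R N] [AddCommMonoid A] [Module R A] [AddCommMonoid B] [Module R B] [AddCommMonoid C]
  [Module R C]

lemma exists_sum_nat_eq {ι P X : Type*} [AddCommMonoid P] [Nonempty X] (s : Finset ι) (x : ι → X)
    (f : X → P) : ∃ (t : Finset ℕ) (y : ℕ → X), ∑ i ∈ s, f (x i) = ∑ j ∈ t, f (y j) := by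
  classical
  refine ⟨Finset.range s.card, fun j => if h : j < s.card then x (s.equivFin.symm ⟨j, h⟩) else
    Classical.arbitrary X, ?_⟩
  rw [Finset.sum_range, ← Finset.sum_coe_sort, ← s.equivFin.symm.sum_comp]
  simp

lemma exists_nat_sum_tmul (x : M ⊗[R] N) :
    ∃ (t : Finset ℕ) (m : ℕ → M) (n : ℕ → N), x = ∑ j ∈ t, m j ⊗ₜ[R] n j := by
  obtain ⟨s, rfl⟩ := TensorProduct.exists_finset x
  obtain ⟨t, y, hy⟩ := exists_sum_nat_eq s id (fun p : M × N => p.1 ⊗ₜ[R] p.2)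
  exact ⟨t, fun j => (y j).1, fun j => (y j).2, hy⟩

lemma exists_nat_sum_tmul_tmul (x : (A ⊗[R] B) ⊗[R] C) :
    ∃ (t : Finset ℕ) (a : ℕ → A) (b : ℕ → B) (c : ℕ → C),
      x = ∑ j ∈ t, (a j ⊗ₜ[R] b j) ⊗ₜ[R] c j := by
  obtain ⟨s, y, c, rfl⟩ := exists_nat_sum_tmul x
  choose S hS using fun i => TensorProduct.exists_finset (y i)
  obtain ⟨t, z, hz⟩ := exists_sum_nat_eq (s.sigma S) (fun p => (p.2, c p.1))
    (fun p : (A × B) × C => (p.1.1 ⊗ₜ[R] p.1.2) ⊗ₜ[R] p.2)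
  refine ⟨t, fun j => (z j).1.1, fun j => (z j).1.2, fun j => (z j).2, ?_⟩
  rw [← hz, Finset.sum_sigma]
  refine Finset.sum_congr rfl fun i _ => ?_
  rw [hS i, TensorProduct.sum_tmul]

end Representation

section CrossedCompatibility

variable {R M N C H : Type*} [CommSemiring R] [AddCommMonoid M] [Module R M] [AddCommMonoid N]
  [Module R N] [AddCommMonoid C] [Module R C] [CoalgebraStruct R C]

/-- The diagonal action `c ↦ (m ⊗ n ↦ ρ(c₁) m ⊗ τ(c₂) n)` on a tensor product. -/
def tensorAct (ρ : C →ₗ[R] Module.End R M) (τ : C →ₗ[R] Module.End R N) :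
    C →ₗ[R] Module.End R (M ⊗[R] N) :=
  TensorProduct.homTensorHomMap (.id R) M N M N ∘ₗ TensorProduct.map ρ τ ∘ₗ comul

lemma tensorAct_apply (ρ : C →ₗ[R] Module.End R M) (τ : C →ₗ[R] Module.End R N) {ι : Type*} {c : C}
    (𝓡 : Repr R c ι) :
    tensorAct ρ τ c =
      ∑ i ∈ 𝓡.index, TensorProduct.map (ρ (𝓡.left i)) (τ (𝓡.right i)) := by
  simp [tensorAct, ← 𝓡.eq]

variable [Semiring H]

variable (R M H) in
/-- Right multiplication `y ↦ (m ⊗ x ↦ m ⊗ x y)` on the second factor of `M ⊗ H`. -/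
def rightMul [Algebra R H] : H →ₗ[R] Module.End R (M ⊗[R] H) :=
  LinearMap.lTensorHom M ∘ₗ (LinearMap.mul R H).flip

@[simp]
lemma rightMul_tmul [Algebra R H] (y : H) (m : M) (x : H) :
    rightMul R M H y (m ⊗ₜ x) = m ⊗ₜ (x * y) := rfl

/-- The algebra morphism `h ↦ (m ⊗ x ↦ m ⊗ x α(T(h)))` attached to an anti-bialgebra morphism
`T` and an algebra morphism `α`. -/
def IsAntiBialgHom.rightMulHom [Bialgebra R H] {T : H →ₗ[R] H} (hT : IsAntiBialgHom T)
    (α : H →ₐ[R] H) : H →ₐ[R] Module.End R (M ⊗[R] H) :=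
  AlgHom.ofLinearMap (rightMul R M H ∘ₗ α.toLinearMap ∘ₗ T)
    (by ext; simp [hT.map_one]) (fun x y => by ext; simp [hT.map_mul, mul_assoc])

/-- The compatibility `h₁·m₀ ⊗ β(h₂) m₁ = (h₂·m)₀ ⊗ (h₂·m)₁ α(h₁)` between an action and a
coaction. It is the Yetter-Drinfeld condition freed from the inverse of the antipode. -/
def IsCrossed [Bialgebra R H] (α β : H →ₗ[R] H) (act : H →ₗ[R] M →ₗ[R] M)
    (coact : M →ₗ[R] M ⊗[R] H) : Prop :=
  ∀ (m : M) (h : H), convAct (rightMul R M H ∘ₗ α) (coact ∘ₗ act.flip m) h =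
    tensorAct act (LinearMap.mul R H ∘ₗ β) h (coact m)

lemma isCrossed_iff_eq_convAct [HopfAlgebra R H] {T : H →ₗ[R] H} (hT : IsAntiBialgHom T)
    (hTS : ∀ h, T (antipode R h) = h) (α : H →ₐ[R] H) (β : H →ₗ[R] H)
    (act : H →ₗ[R] M →ₗ[R] M) (coact : M →ₗ[R] M ⊗[R] H) :
    IsCrossed α.toLinearMap β act coact ↔ ∀ m : M, coact ∘ₗ act.flip m =
      convAct (hT.rightMulHom α).toLinearMap
        ((tensorAct act (LinearMap.mul R H ∘ₗ β)).flip (coact m)) := by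
  have untwist : (hT.rightMulHom α).toLinearMap ∘ₗ antipode R =
      rightMul R M H ∘ₗ α.toLinearMap := by
    ext; simp [IsAntiBialgHom.rightMulHom, hTS]
  simp only [eq_convAct_iff, untwist]
  exact ⟨fun h m => LinearMap.ext (h m), fun h m => LinearMap.congr_fun (h m)⟩

lemma convAct_rightMulHom_tensorAct [Bialgebra R H] {T : H →ₗ[R] H} (hT : IsAntiBialgHom T)
    (α : H →ₐ[R] H) (β : H →ₗ[R] H) (act : H →ₗ[R] M →ₗ[R] M) {ι κ : Type*} {h : H}
    {s : Finset ι} {a b c : ι → H} {x : M ⊗[R] H} {t : Finset κ} {m₀ : κ → M} {m₁ : κ → H}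
    (hh : LinearMap.rTensor H comul (comul (R := R) h) = ∑ i ∈ s, (a i ⊗ₜ[R] b i) ⊗ₜ[R] c i)
    (hx : x = ∑ j ∈ t, m₀ j ⊗ₜ[R] m₁ j) :
    convAct (hT.rightMulHom α).toLinearMap ((tensorAct act (LinearMap.mul R H ∘ₗ β)).flip x) h =
      ∑ i ∈ s, ∑ j ∈ t, act (b i) (m₀ j) ⊗ₜ[R] (β (c i) * m₁ j * α (T (a i))) := by
  subst hx
  let G := (TensorProduct.homTensorHomMap (.id R) M H M H ∘ₗ
    TensorProduct.map act (LinearMap.mul R H ∘ₗ β)).flip (∑ j ∈ t, m₀ j ⊗ₜ[R] m₁ j)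
  refine (convAct_comp_comul _ G s a b c hh).trans ?_
  simp [G, IsAntiBialgHom.rightMulHom]

end CrossedCompatibility

section YetterDrinfeld

variable {k H M : Type} [Field k] [Ring H] [HopfAlgebra k H] [AddCommGroup M] [Module k M]

/-- `act` makes `M` a left module over `H`. -/
def IsLeftAction (act : H →ₗ[k] M →ₗ[k] M) : Prop :=
  (∀ m : M, act 1 m = m) ∧ ∀ (g h : H) (m : M), act (g * h) m = act g (act h m)

/-- `coact` makes `M` a right comodule over `H`. -/
def IsRightCoaction (coact : M →ₗ[k] M ⊗[k] H) : Prop :=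
  (∀ m : M, LinearMap.rTensor H coact (coact m)
      = (TensorProduct.assoc k M H H).symm
          (LinearMap.lTensor M (Coalgebra.comul (R := k)) (coact m))) ∧
  (∀ m : M,
    TensorProduct.rid k M (LinearMap.lTensor M (Coalgebra.counit (R := k)) (coact m)) = m)

/-- The inverse of the antipode, bundled with the antipode as a linear equivalence. -/
def IsAntipodeInv.antipodeEquiv {Sinv : H → H} (hS : IsAntipodeInv k H Sinv) : H ≃ₗ[k] H :=
  { antipode k with
    invFun := Sinv
    left_inv := hS.2
    right_inv := hS.1 }

lemma IsAntipodeInv.isAntiBialgHom_antipodeEquiv_symm {Sinv : H → H}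
    (hS : IsAntipodeInv k H Sinv) :
    IsAntiBialgHom (hS.antipodeEquiv.symm : H →ₗ[k] H) :=
  IsAntiBialgHom.symm (e := hS.antipodeEquiv) isAntiBialgHom_antipode

lemma isYD_iff {Sinv : H → H} (hS : IsAntipodeInv k H Sinv) (α : H →ₐ[k] H) (β : H →ₗ[k] H)
    (act : H →ₗ[k] M →ₗ[k] M) (coact : M →ₗ[k] M ⊗[k] H) :
    IsYD k H Sinv α β act coact ↔
      IsLeftAction act ∧ IsRightCoaction coact ∧ IsCrossed α.toLinearMap β act coact := by
  have hT := hS.isAntiBialgHom_antipodeEquiv_symm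
  rw [isCrossed_iff_eq_convAct hT hS.2]
  constructor
  · rintro ⟨one, mul, coassoc, counit, compat⟩
    refine ⟨⟨one, mul⟩, ⟨coassoc, counit⟩, fun m => LinearMap.ext fun h => ?_⟩
    obtain ⟨s, a, b, c, hh⟩ :=
      exists_nat_sum_tmul_tmul (LinearMap.rTensor H comul (comul (R := k) h))
    obtain ⟨t, m₀, m₁, hm⟩ := exists_nat_sum_tmul (coact m)
    rw [convAct_rightMulHom_tensorAct hT α β act hh hm]
    exact compat h m s t a b c m₀ m₁ hh hm
  · rintro ⟨⟨one, mul⟩, ⟨coassoc, counit⟩, compat⟩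
    refine ⟨one, mul, coassoc, counit, fun h m s t a b c m₀ m₁ hh hm => ?_⟩
    rw [← LinearMap.flip_apply act, ← LinearMap.comp_apply, compat,
      convAct_rightMulHom_tensorAct hT α β act hh hm]
    rfl

end YetterDrinfeld

section DualTensorHom

variable {R M M' N N' : Type*} [CommSemiring R] [AddCommMonoid M] [Module R M] [AddCommMonoid M']
  [Module R M'] [AddCommMonoid N] [Module R N] [AddCommMonoid N'] [Module R N']

lemma dualTensorHom_injective [Module.Free R N] : Function.Injective (dualTensorHom R M N) := by
  classical
  let b := Module.Free.chooseBasis R N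
  have coord (x : Module.Dual R M ⊗[R] N) (m : M) (i) :
      TensorProduct.equivFinsuppOfBasisRight b x i m = b.repr (dualTensorHom R M N x m) i := by
    induction x with
    | zero => simp
    | add x y hx hy => simp [hx, hy]
    | tmul f n => simp [mul_comm]
  intro x y hxy
  refine (TensorProduct.equivFinsuppOfBasisRight b).injective ?_
  ext i m
  rw [coord, coord, hxy]

lemma dualTensorHom_map_dualMap (u : M' →ₗ[R] M) (v : N →ₗ[R] N') (x : Module.Dual R M ⊗[R] N) :
    dualTensorHom R M' N' (TensorProduct.map u.dualMap v x) = v ∘ₗ dualTensorHom R M N x ∘ₗ u := by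
  induction x with
  | zero => simp
  | add x y hx hy => simp [hx, hy, LinearMap.comp_add, LinearMap.add_comp]
  | tmul f n => ext; simp

lemma dualTensorHom_lTensor (v : N →ₗ[R] N') (x : Module.Dual R M ⊗[R] N) (m : M) :
    dualTensorHom R M N' (v.lTensor _ x) m = v (dualTensorHom R M N x m) :=
  LinearMap.congr_fun (LinearMap.congr_fun (dualTensorHom_comp_lTensor v) x) m

lemma lid_rTensor_dual_eval (m : M) (x : Module.Dual R M ⊗[R] N) :
    TensorProduct.lid R N (LinearMap.rTensor N (Module.Dual.eval R M m) x) =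
      dualTensorHom R M N x m := by
  induction x with
  | zero => simp
  | add x y hx hy => simp [hx, hy]
  | tmul f n => simp

lemma dualTensorHom_assoc_tmul (x : Module.Dual R M ⊗[R] N) (n : N') (m : M) :
    dualTensorHom R M (N ⊗[R] N') (TensorProduct.assoc R _ N N' (x ⊗ₜ n)) m =
      dualTensorHom R M N x m ⊗ₜ n := by
  induction x with
  | zero => simp
  | add x y hx hy => simp [TensorProduct.add_tmul, hx, hy]
  | tmul f n => simp [TensorProduct.smul_tmul']

lemma rid_lTensor_apply (v : N →ₗ[R] R) (x : Module.Dual R M ⊗[R] N) (m : M) :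
    TensorProduct.rid R _ (LinearMap.lTensor _ v x) m = v (dualTensorHom R M N x m) := by
  induction x with
  | zero => simp
  | add x y hx hy => simp [hx, hy]
  | tmul f n => simp [mul_comm]

/-- The contraction `m ⊗ n ↦ f(m) n` of `M ⊗ N` against a linear form `f` on `M`. -/
def evalLeft (N : Type*) [AddCommMonoid N] [Module R N] (f : Module.Dual R M) : M ⊗[R] N →ₗ[R] N :=
  TensorProduct.lid R N ∘ₗ f.rTensor N

@[simp]
lemma evalLeft_tmul (f : Module.Dual R M) (m : M) (n : N) : evalLeft N f (m ⊗ₜ n) = f m • n := by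
  simp [evalLeft]

lemma evalLeft_map (f : Module.Dual R M) (u : M' →ₗ[R] M) (v : N →ₗ[R] N') (x : M' ⊗[R] N) :
    evalLeft N' f (TensorProduct.map u v x) = v (evalLeft N (u.dualMap f) x) := by
  induction x with
  | zero => simp
  | add x y hx hy => simp [hx, hy]
  | tmul m n => simp

lemma evalLeft_lTensor (f : Module.Dual R M) (v : N →ₗ[R] N') (x : M ⊗[R] N) :
    evalLeft N' f (v.lTensor M x) = v (evalLeft N f x) := by
  rw [LinearMap.lTensor, evalLeft_map, LinearMap.dualMap_id, LinearMap.id_apply]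

lemma rTensor_evalLeft_assoc_symm (f : Module.Dual R M) (x : M ⊗[R] (N ⊗[R] N')) :
    (evalLeft N f).rTensor N' ((TensorProduct.assoc R M N N').symm x) =
      evalLeft (N ⊗[R] N') f x := by
  obtain ⟨x, rfl⟩ := (TensorProduct.assoc R M N N').surjective x
  rw [LinearEquiv.symm_apply_apply]
  induction x using TensorProduct.induction_on with
  | zero => simp
  | add x y hx hy => simp [hx, hy]
  | tmul x n =>
    induction x using TensorProduct.induction_on with
    | zero => simp
    | add x y hx hy => simp_all [TensorProduct.add_tmul]
    | tmul m p => simp [TensorProduct.smul_tmul']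

lemma dual_rid_lTensor (f : Module.Dual R M) (v : N →ₗ[R] R) (x : M ⊗[R] N) :
    f (TensorProduct.rid R M (v.lTensor M x)) = v (evalLeft N f x) := by
  induction x with
  | zero => simp
  | add x y hx hy => simp [hx, hy]
  | tmul m n => simp [mul_comm]

end DualTensorHom

section Dual

variable {k H M : Type} [Field k] [Ring H] [HopfAlgebra k H] [AddCommGroup M] [Module k M]
  {θ σ : H →ₗ[k] H} {actM : H →ₗ[k] M →ₗ[k] M} {coactM : M →ₗ[k] M ⊗[k] H}
  {actD : H →ₗ[k] Module.Dual k M →ₗ[k] Module.Dual k M}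
  {coactD : Module.Dual k M →ₗ[k] Module.Dual k M ⊗[k] H}

lemma DualActChar.apply_eq_dualMap (hactD : DualActChar k H θ actM actD) (h : H) :
    actD h = (actM (θ h)).dualMap := by
  ext f m
  exact hactD h f m

lemma DualCoactChar.dualTensorHom_apply (hcoactD : DualCoactChar k H σ coactM coactD)
    (f : Module.Dual k M) (m : M) :
    dualTensorHom k M H (coactD f) m = σ (evalLeft H f (coactM m)) := by
  obtain ⟨t, m₀, m₁, hm⟩ := exists_nat_sum_tmul (coactM m)
  rw [← lid_rTensor_dual_eval, hcoactD f m t m₀ m₁ hm, hm]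
  simp

lemma IsLeftAction.dual (hactM : IsLeftAction actM) (hθ : IsAntiBialgHom θ)
    (hactD : DualActChar k H θ actM actD) : IsLeftAction actD := by
  refine ⟨fun f => ?_, fun g h f => ?_⟩
  · ext m
    rw [hactD, hθ.map_one, hactM.1]
  · ext m
    rw [hactD, hactD, hactD, hθ.map_mul, hactM.2]

lemma DualCoactChar.dualTensorHom_assoc_rTensor (hcoactD : DualCoactChar k H σ coactM coactD)
    (x : Module.Dual k M ⊗[k] H) (m : M) :
    dualTensorHom k M (H ⊗[k] H) (TensorProduct.assoc k _ H H (LinearMap.rTensor H coactD x)) m =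
      TensorProduct.comm k H H (TensorProduct.map (dualTensorHom k M H x) σ (coactM m)) := by
  induction x with
  | zero => simp
  | add x y hx hy => simp [hx, hy, TensorProduct.map_add_left]
  | tmul f n =>
    rw [LinearMap.rTensor_tmul, dualTensorHom_assoc_tmul, hcoactD.dualTensorHom_apply]
    generalize coactM m = y
    induction y with
    | zero => simp
    | add x y hx hy => simp [hx, hy, TensorProduct.add_tmul]
    | tmul m h => simp [TensorProduct.smul_tmul']

lemma IsRightCoaction.dual (hcoactM : IsRightCoaction coactM) (hσ : IsAntiBialgHom σ)
    (hcoactD : DualCoactChar k H σ coactM coactD) : IsRightCoaction coactD := by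
  refine ⟨fun f => ?_, fun f => ?_⟩
  · rw [LinearEquiv.eq_symm_apply]
    apply dualTensorHom_injective
    ext m
    have hf : dualTensorHom k M H (coactD f) = σ ∘ₗ evalLeft H f ∘ₗ coactM :=
      LinearMap.ext (hcoactD.dualTensorHom_apply f)
    calc dualTensorHom k M (H ⊗[k] H)
          (TensorProduct.assoc k _ H H (LinearMap.rTensor H coactD (coactD f))) m
        = TensorProduct.comm k H H (TensorProduct.map σ σ (LinearMap.rTensor H (evalLeft H f)
            (LinearMap.rTensor H coactM (coactM m)))) := by
          rw [hcoactD.dualTensorHom_assoc_rTensor, hf, LinearMap.rTensor, LinearMap.rTensor,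
            TensorProduct.map_map, TensorProduct.map_map]
          rfl
      _ = comul (σ (evalLeft H f (coactM m))) := by
          rw [hcoactM.1, rTensor_evalLeft_assoc_symm, evalLeft_lTensor, hσ.comul_map,
            TensorProduct.map_comm]
      _ = dualTensorHom k M (H ⊗[k] H) (LinearMap.lTensor _ comul (coactD f)) m := by
          rw [dualTensorHom_lTensor, hcoactD.dualTensorHom_apply]
  · ext m
    rw [rid_lTensor_apply, hcoactD.dualTensorHom_apply, hσ.counit_map, ← dual_rid_lTensor,
      hcoactM.2]

lemma IsCrossed.dual {α β : H →ₗ[k] H} (crossed : IsCrossed α β actM coactM) (hθ : IsAntiBialgHom θ)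
    (hσ : IsAntiBialgHom σ) (hσθ : ∀ h, σ (θ h) = h) (hα : ∀ h, α (θ h) = θ (α h))
    (hβ : ∀ h, β (θ h) = θ (β h)) (hactD : DualActChar k H θ actM actD)
    (hcoactD : DualCoactChar k H σ coactM coactD) : IsCrossed β α actD coactD := by
  intro f h
  apply dualTensorHom_injective
  ext m
  let 𝓡 := ℛ k h
  have crossed_θ := congrArg (fun x => σ (evalLeft H f x)) (crossed m (θ h))
  simp only [convAct_apply _ _ (hθ.repr 𝓡), tensorAct_apply _ _ (hθ.repr 𝓡), map_sum,
    LinearMap.sum_apply] at crossed_θ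
  calc dualTensorHom k M H (convAct (rightMul k _ H ∘ₗ β) (coactD ∘ₗ actD.flip f) h) m
      = ∑ i ∈ 𝓡.index, σ (evalLeft H f (TensorProduct.map (actM (θ (𝓡.right i)))
          (LinearMap.mul k H (β (θ (𝓡.left i)))) (coactM m))) := by
        simp only [convAct_apply _ _ 𝓡, map_sum, LinearMap.sum_apply]
        refine Finset.sum_congr rfl fun i _ => ?_
        simp [rightMul, dualTensorHom_lTensor, hcoactD.dualTensorHom_apply, hactD.apply_eq_dualMap,
          evalLeft_map, hσ.map_mul, hβ, hσθ]
    _ = ∑ i ∈ 𝓡.index, σ (evalLeft H f (rightMul k M H (α (θ (𝓡.right i)))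
          (coactM (actM (θ (𝓡.left i)) m)))) := crossed_θ.symm
    _ = dualTensorHom k M H (tensorAct actD (LinearMap.mul k H ∘ₗ α) h (coactD f)) m := by
        simp only [tensorAct_apply _ _ 𝓡, map_sum, LinearMap.sum_apply]
        refine Finset.sum_congr rfl fun i _ => ?_
        rw [hactD.apply_eq_dualMap, dualTensorHom_map_dualMap]
        simp [rightMul, evalLeft_lTensor, hcoactD.dualTensorHom_apply, hσ.map_mul, hα, hσθ]

lemma IsYD.dual {Sinv : H → H} (hS : IsAntipodeInv k H Sinv) {α β : H →ₐ[k] H}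
    (hM : IsYD k H Sinv α β actM coactM) (hθ : IsAntiBialgHom θ) (hσ : IsAntiBialgHom σ)
    (hσθ : ∀ h, σ (θ h) = h) (hα : ∀ h, α (θ h) = θ (α h)) (hβ : ∀ h, β (θ h) = θ (β h))
    (hactD : DualActChar k H θ actM actD) (hcoactD : DualCoactChar k H σ coactM coactD) :
    IsYD k H Sinv β α actD coactD := by
  obtain ⟨action, coaction, crossed⟩ := (isYD_iff hS α β.toLinearMap actM coactM).1 hM
  exact (isYD_iff hS β α.toLinearMap actD coactD).2
    ⟨action.dual hθ hactD, coaction.dual hσ hcoactD,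
      crossed.dual hθ hσ hσθ hα hβ hactD hcoactD⟩

end Dual

section Automorphism

variable {k H : Type} [Field k] [Ring H] [HopfAlgebra k H]

/-- A Hopf algebra automorphism, viewed as a bialgebra morphism. -/
def IsHopfAut.toBialgHom {φ : H ≃ₗ[k] H} (hφ : IsHopfAut k H φ) : H →ₐc[k] H :=
  .ofAlgHom (.ofLinearMap φ hφ.2.1 hφ.1) (by ext h; exact hφ.2.2.2 h)
    (by ext h; exact (hφ.2.2.1 h).symm)

end Automorphism

end GYD

theorem statement_4_general
    {k H : Type} [Field k] [Ring H] [HopfAlgebra k H]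
    {Sinv : H → H} (hS : GYD.IsAntipodeInv k H Sinv)
    (α β : H →ₐc[k] H)
    {M : Type} [AddCommGroup M] [Module k M]
    {actM : H →ₗ[k] M →ₗ[k] M} {coactM : M →ₗ[k] M ⊗[k] H}
    (hM : GYD.IsYD k H Sinv α β actM coactM)
    {actD : H →ₗ[k] Module.Dual k M →ₗ[k] Module.Dual k M}
    {coactD : Module.Dual k M →ₗ[k] Module.Dual k M ⊗[k] H}
    (hactD : GYD.DualActChar k H (fun h => HopfAlgebra.antipode (R := k) h) actM actD)
    (hcoactD : GYD.DualCoactChar k H Sinv coactM coactD)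
    {actD' : H →ₗ[k] Module.Dual k M →ₗ[k] Module.Dual k M}
    {coactD' : Module.Dual k M →ₗ[k] Module.Dual k M ⊗[k] H}
    (hactD' : GYD.DualActChar k H Sinv actM actD')
    (hcoactD' : GYD.DualCoactChar k H (fun h => HopfAlgebra.antipode (R := k) h) coactM coactD') :
    GYD.IsYD k H Sinv β α actD coactD ∧ GYD.IsYD k H Sinv β α actD' coactD' := by
  have hSinv := hS.isAntiBialgHom_antipodeEquiv_symm
  have comm (φ : H →ₐc[k] H) (h : H) := (GYD.antipode_bialgHom φ h).symm
  have comm_inv (φ : H →ₐc[k] H) (h : H) : φ (Sinv h) = Sinv (φ h) := by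
    rw [← hS.2 (φ (Sinv h)), GYD.antipode_bialgHom, hS.1]
  exact ⟨GYD.IsYD.dual (α := α) (β := β) hS hM GYD.isAntiBialgHom_antipode hSinv hS.2
      (comm α) (comm β) hactD hcoactD,
    GYD.IsYD.dual (α := α) (β := β) hS hM hSinv GYD.isAntiBialgHom_antipode hS.1
      (comm_inv α) (comm_inv β) hactD' hcoactD'⟩

theorem statement_4
    (k H : Type) [Field k] [Ring H] [HopfAlgebra k H]
    (Sinv : H → H) (hS : GYD.IsAntipodeInv k H Sinv)
    (α β : H ≃ₗ[k] H)
    (hα : GYD.IsHopfAut k H α) (hβ : GYD.IsHopfAut k H β)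
    (M : Type) [AddCommGroup M] [Module k M] [FiniteDimensional k M]
    (actM : H →ₗ[k] M →ₗ[k] M) (coactM : M →ₗ[k] M ⊗[k] H)
    (hM : GYD.IsYD k H Sinv ⇑α ⇑β actM coactM)
    (actD : H →ₗ[k] Module.Dual k M →ₗ[k] Module.Dual k M)
    (coactD : Module.Dual k M →ₗ[k] Module.Dual k M ⊗[k] H)
    (hactD : GYD.DualActChar k H (fun h => HopfAlgebra.antipode (R := k) h) actM actD)
    (hcoactD : GYD.DualCoactChar k H Sinv coactM coactD)
    (actD' : H →ₗ[k] Module.Dual k M →ₗ[k] Module.Dual k M)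
    (coactD' : Module.Dual k M →ₗ[k] Module.Dual k M ⊗[k] H)
    (hactD' : GYD.DualActChar k H Sinv actM actD')
    (hcoactD' : GYD.DualCoactChar k H (fun h => HopfAlgebra.antipode (R := k) h) coactM coactD') :
    GYD.IsYD k H Sinv ⇑β ⇑α actD coactD ∧ GYD.IsYD k H Sinv ⇑β ⇑α actD' coactD' :=
  statement_4_general hS hα.toBialgHom hβ.toBialgHom hM hactD hcoactD hactD' hcoactD'

end
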